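/- Let ρ be an n×n positive definite hermitian matrix, α ∈ ℝ, let T_1, …, T_D be linearly independent hermitian matrices in M_n(ℂ), and let L be a hermitian matrix. Define G_{jk} = tr[T_j Ω_ρ^α(T_k)] and l_j = tr[T_j Ω_ρ^α(L)]. Then G is invertible, the vector l has real entries, and the function v ↦ tr[(Σ_j v^j T_j − L) Ω_ρ^α(Σ_k v^k T_k − L)] on ℝ^D attains its unique minimum at v = G^{-1} l. -/

import Mathlib

open scoped Matrix ComplexOrder
/-- Real power `ρ^t` of a hermitian matrix, defined through the spectral
decomposition (continuous functional calculus applied to `x ↦ x ^ t`). -/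
noncomputable def matrixRpow {n : Type*} [Fintype n] [DecidableEq n]
    {ρ : Matrix n n ℂ} (hρ : ρ.IsHermitian) (t : ℝ) : Matrix n n ℂ :=
  hρ.cfc fun x => x ^ t

/-- The superoperator `Ω_ρ^α(σ) = (1/2)(ρ^{-α} σ ρ^{α-1} + ρ^{α-1} σ ρ^{-α})`. -/
noncomputable def Omega {n : Type*} [Fintype n] [DecidableEq n]
    {ρ : Matrix n n ℂ} (hρ : ρ.IsHermitian) (α : ℝ) (σ : Matrix n n ℂ) : Matrix n n ℂ :=
  (1 / 2 : ℂ) • (matrixRpow hρ (-α) * σ * matrixRpow hρ (α - 1)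
    + matrixRpow hρ (α - 1) * σ * matrixRpow hρ (-α))

/-!
The real part of `tr(Xᴴ Ω(Y))` is a symmetric real bilinear form on `M_n(ℂ)`, equal to `tr(X Ω(Y))`
when `X` and `Y` are hermitian. It is positive definite: after vectorization, the map
`X ↦ ρ^s X ρ^t` becomes the Kronecker product of two positive definite matrices. The theorem is then
least squares for a positive definite form: `v = G⁻¹ l` solves the normal equations, so the residual
`∑ v^k T_k - L` is orthogonal to the span of the `T_k`, and by Pythagoras any other choice of
coefficients adds the positive squared length of a nonzero vector of that span.
-/

section LeastSquares

variable {R K V ι : Type*} [AddCommGroup V]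

section CommRing

variable [CommRing R] [Module R V] (B : LinearMap.BilinForm R V) (T : ι → V)

/-- The Gram matrix of a family of vectors with respect to a bilinear form; `Matrix.gram` is the
case of an inner product. -/
def gramMatrix : Matrix ι ι R :=
  Matrix.of fun i j => B (T i) (T j)

variable [Fintype ι]

lemma gramMatrix_mulVec (v : ι → R) (i : ι) :
    (gramMatrix B T *ᵥ v) i = B (T i) (Fintype.linearCombination R T v) := by
  simp only [Matrix.mulVec, dotProduct, gramMatrix, Matrix.of_apply,
    Fintype.linearCombination_apply, map_sum, map_smul, smul_eq_mul, mul_comm]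

lemma apply_linearCombination_left (u : ι → R) (x : V) :
    B (Fintype.linearCombination R T u) x = ∑ i, u i * B (T i) x := by
  simp only [Fintype.linearCombination_apply, map_sum, LinearMap.sum_apply, map_smul,
    LinearMap.smul_apply, smul_eq_mul]

variable [DecidableEq ι]

/-- The solution `G⁻¹ l` of the normal equations for approximating `L` by linear combinations of
the family `T`, where `G` is the Gram matrix of `T` and `l i = B (T i) L`. It is meaningful only
when `G` is invertible, since otherwise `G⁻¹ = 0`. -/
noncomputable def leastSquaresCoeff (L : V) : ι → R :=
  (gramMatrix B T)⁻¹ *ᵥ fun i => B (T i) L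

variable {B T}

lemma gramMatrix_mulVec_leastSquaresCoeff (hG : IsUnit (gramMatrix B T)) (L : V) :
    gramMatrix B T *ᵥ leastSquaresCoeff B T L = fun i => B (T i) L := by
  rw [leastSquaresCoeff, Matrix.mulVec_mulVec,
    Matrix.mul_nonsing_inv _ ((Matrix.isUnit_iff_isUnit_det _).1 hG), Matrix.one_mulVec]

lemma apply_linearCombination_residual_eq_zero (hG : IsUnit (gramMatrix B T)) (L : V)
    (u : ι → R) :
    B (Fintype.linearCombination R T u)
      (Fintype.linearCombination R T (leastSquaresCoeff B T L) - L) = 0 := by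
  rw [apply_linearCombination_left]
  refine Finset.sum_eq_zero fun i _ => ?_
  rw [map_sub, ← gramMatrix_mulVec, gramMatrix_mulVec_leastSquaresCoeff hG, sub_self, mul_zero]

lemma toQuadraticMap_linearCombination_sub (hB : B.IsSymm) (hG : IsUnit (gramMatrix B T))
    (L : V) (v : ι → R) :
    B.toQuadraticMap (Fintype.linearCombination R T v - L) =
      B.toQuadraticMap (Fintype.linearCombination R T (v - leastSquaresCoeff B T L)) +
        B.toQuadraticMap (Fintype.linearCombination R T (leastSquaresCoeff B T L) - L) := by
  have residual_orthogonal :=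
    apply_linearCombination_residual_eq_zero hG L (v - leastSquaresCoeff B T L)
  have residual_add : Fintype.linearCombination R T v - L =
      Fintype.linearCombination R T (v - leastSquaresCoeff B T L) +
        (Fintype.linearCombination R T (leastSquaresCoeff B T L) - L) := by
    rw [map_sub, sub_add_sub_cancel]
  rw [residual_add, QuadraticMap.map_add B.toQuadraticMap, LinearMap.BilinMap.polar_toQuadraticMap,
    hB.eq (_ - _), residual_orthogonal, add_zero, add_zero]

end CommRing

lemma isUnit_gramMatrix [Field K] [Module K V] [Fintype ι] [DecidableEq ι]
    {B : LinearMap.BilinForm K V} {T : ι → V} (hB : B.toQuadraticMap.Anisotropic)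
    (hT : LinearIndependent K T) : IsUnit (gramMatrix B T) := by
  rw [← Matrix.mulVec_injective_iff_isUnit, ← Matrix.coe_mulVecLin, injective_iff_map_eq_zero]
  intro v hv
  refine (map_eq_zero_iff _ hT.fintypeLinearCombination_injective).1 (hB _ ?_)
  rw [LinearMap.BilinMap.toQuadraticMap_apply, apply_linearCombination_left]
  refine Finset.sum_eq_zero fun i _ => ?_
  rw [← gramMatrix_mulVec, ← Matrix.mulVecLin_apply, hv, Pi.zero_apply, mul_zero]

lemma toQuadraticMap_leastSquaresCoeff_lt [Field K] [LinearOrder K] [IsStrictOrderedRing K]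
    [Module K V] [Fintype ι] [DecidableEq ι] {B : LinearMap.BilinForm K V} {T : ι → V}
    (hB : B.IsSymm) (hpos : B.toQuadraticMap.PosDef) (hT : LinearIndependent K T) (L : V)
    {v : ι → K} (hv : v ≠ leastSquaresCoeff B T L) :
    B.toQuadraticMap (Fintype.linearCombination K T (leastSquaresCoeff B T L) - L) <
      B.toQuadraticMap (Fintype.linearCombination K T v - L) := by
  rw [toQuadraticMap_linearCombination_sub hB (isUnit_gramMatrix hpos.anisotropic hT) L v]
  refine lt_add_of_pos_left _ (hpos _ ?_)
  rwa [ne_eq, map_eq_zero_iff _ hT.fintypeLinearCombination_injective, sub_eq_zero]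

end LeastSquares

lemma isSelfAdjoint_linearCombination {R A ι : Type*} [Semiring R] [Star R] [TrivialStar R]
    [AddCommMonoid A] [StarAddMonoid A] [Module R A] [StarModule R A] [Fintype ι] {T : ι → A}
    (hT : ∀ i, IsSelfAdjoint (T i)) (v : ι → R) :
    IsSelfAdjoint (Fintype.linearCombination R T v) := by
  rw [Fintype.linearCombination_apply]
  exact isSelfAdjoint_sum _ fun i _ => (IsSelfAdjoint.all (v i)).smul (hT i)

section PositiveDefinite

variable {𝕜 m n : Type*} [RCLike 𝕜] [Fintype m] [Fintype n]

open scoped Kronecker in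
lemma trace_conjTranspose_mul_mul_mul_pos {A : Matrix m m 𝕜} {B : Matrix n n 𝕜} (hA : A.PosDef)
    (hB : B.PosDef) {X : Matrix m n 𝕜} (hX : X ≠ 0) : 0 < (Xᴴ * (A * X * B)).trace := by
  have vec_form : (Xᴴ * (A * X * B)).trace = star X.vec ⬝ᵥ ((Bᵀ ⊗ₖ A) *ᵥ X.vec) := by
    rw [Matrix.kronecker_mulVec_vec, Matrix.transpose_transpose, Matrix.star_vec_dotProduct_vec]
  rw [vec_form]
  exact (hB.transpose.kronecker hA).dotProduct_mulVec_pos (Matrix.vec_eq_zero_iff.not.2 hX)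

lemma posDef_cfc [DecidableEq n] {A : Matrix n n 𝕜} (hA : A.IsHermitian) {f : ℝ → ℝ}
    (hf : ∀ i, 0 < f (hA.eigenvalues i)) : (hA.cfc f).PosDef := by
  rw [Matrix.IsHermitian.cfc, Unitary.conjStarAlgAut_apply,
    Matrix.IsUnit.posDef_star_right_conjugate_iff (Unitary.isUnit_coe)]
  exact Matrix.PosDef.diagonal fun i => RCLike.ofReal_pos.2 (hf i)

end PositiveDefinite

section Omega

variable {n : Type*} [Fintype n] [DecidableEq n] {ρ : Matrix n n ℂ}

lemma posDef_matrixRpow (hρ : ρ.PosDef) (t : ℝ) : (matrixRpow hρ.1 t).PosDef :=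
  posDef_cfc hρ.1 fun i => Real.rpow_pos_of_pos (hρ.eigenvalues_pos i) t

lemma isHermitian_matrixRpow (hρ : ρ.IsHermitian) (t : ℝ) : (matrixRpow hρ t).IsHermitian := by
  rw [matrixRpow, ← hρ.cfc_eq]
  exact cfc_predicate _ ρ

lemma trace_mul_omega (hρ : ρ.IsHermitian) (α : ℝ) (X Y : Matrix n n ℂ) :
    (X * Omega hρ α Y).trace =
      (1 / 2) * ((X * (matrixRpow hρ (-α) * Y * matrixRpow hρ (α - 1))).trace +
        (X * (matrixRpow hρ (α - 1) * Y * matrixRpow hρ (-α))).trace) := by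
  rw [Omega, Matrix.mul_smul, Matrix.trace_smul, mul_add, Matrix.trace_add, smul_eq_mul]

lemma omega_conjTranspose (hρ : ρ.IsHermitian) (α : ℝ) (X : Matrix n n ℂ) :
    (Omega hρ α X)ᴴ = Omega hρ α Xᴴ := by
  simp [Omega, Matrix.mul_assoc, (isHermitian_matrixRpow hρ _).eq, add_comm]

lemma trace_mul_omega_comm (hρ : ρ.IsHermitian) (α : ℝ) (X Y : Matrix n n ℂ) :
    (X * Omega hρ α Y).trace = (Y * Omega hρ α X).trace := by
  have cyclic (A C : Matrix n n ℂ) : (X * (A * Y * C)).trace = (Y * (C * X * A)).trace := by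
    rw [Matrix.mul_assoc A, ← Matrix.mul_assoc, Matrix.trace_mul_comm]
    simp only [Matrix.mul_assoc]
  rw [trace_mul_omega, trace_mul_omega, cyclic, cyclic, add_comm]

lemma star_trace_conjTranspose_mul_omega (hρ : ρ.IsHermitian) (α : ℝ) (X Y : Matrix n n ℂ) :
    star (Xᴴ * Omega hρ α Y).trace = (Yᴴ * Omega hρ α X).trace := by
  rw [← Matrix.trace_conjTranspose, Matrix.conjTranspose_mul, Matrix.conjTranspose_conjTranspose,
    omega_conjTranspose, Matrix.trace_mul_comm, trace_mul_omega_comm]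

lemma trace_conjTranspose_mul_omega_self_pos (hρ : ρ.PosDef) (α : ℝ) {X : Matrix n n ℂ}
    (hX : X ≠ 0) : 0 < (Xᴴ * Omega hρ.1 α X).trace := by
  have trace_pos (s t : ℝ) : 0 < (Xᴴ * (matrixRpow hρ.1 s * X * matrixRpow hρ.1 t)).trace :=
    trace_conjTranspose_mul_mul_mul_pos (posDef_matrixRpow hρ s) (posDef_matrixRpow hρ t) hX
  rw [trace_mul_omega]
  exact mul_pos (by norm_num) (add_pos (trace_pos _ _) (trace_pos _ _))

lemma omega_add (hρ : ρ.IsHermitian) (α : ℝ) (X Y : Matrix n n ℂ) :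
    Omega hρ α (X + Y) = Omega hρ α X + Omega hρ α Y := by
  simp only [Omega, mul_add, add_mul, smul_add]
  abel

lemma omega_smul (hρ : ρ.IsHermitian) (α c : ℝ) (X : Matrix n n ℂ) :
    Omega hρ α (c • X) = c • Omega hρ α X := by
  simp only [Omega, Matrix.mul_smul, Matrix.smul_mul, ← smul_add, smul_comm c]

/-- The real bilinear form `(X, Y) ↦ Re tr(Xᴴ Ω_ρ^α(Y))` on all of `M_n(ℂ)`. The adjoint, absent
from the Gram matrix entries `tr(T_j Ω_ρ^α(T_k))`, makes the form positive definite beyond the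
hermitian matrices. -/
noncomputable def omegaForm (hρ : ρ.IsHermitian) (α : ℝ) :
    LinearMap.BilinForm ℝ (Matrix n n ℂ) :=
  LinearMap.mk₂ ℝ (fun X Y => (Xᴴ * Omega hρ α Y).trace.re)
    (fun X Y Z => by simp [add_mul])
    (fun c X Y => by simp)
    (fun X Y Z => by simp [omega_add, mul_add])
    (fun c X Y => by simp [omega_smul])

lemma omegaForm_apply (hρ : ρ.IsHermitian) (α : ℝ) (X Y : Matrix n n ℂ) :
    omegaForm hρ α X Y = (Xᴴ * Omega hρ α Y).trace.re :=
  rfl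

lemma isSymm_omegaForm (hρ : ρ.IsHermitian) (α : ℝ) : (omegaForm hρ α).IsSymm where
  eq X Y := by
    rw [omegaForm_apply, omegaForm_apply, ← star_trace_conjTranspose_mul_omega]
    exact Complex.conj_re _

lemma posDef_omegaForm (hρ : ρ.PosDef) (α : ℝ) : (omegaForm hρ.1 α).toQuadraticMap.PosDef :=
  fun _ hX => (Complex.pos_iff.1 (trace_conjTranspose_mul_omega_self_pos hρ α hX)).1

lemma ofReal_omegaForm (hρ : ρ.IsHermitian) (α : ℝ) {X Y : Matrix n n ℂ} (hX : X.IsHermitian)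
    (hY : Y.IsHermitian) : (omegaForm hρ α X Y : ℂ) = (X * Omega hρ α Y).trace := by
  have trace_real := star_trace_conjTranspose_mul_omega hρ α X Y
  rw [hX.eq, hY.eq, trace_mul_omega_comm hρ α Y] at trace_real
  rw [omegaForm_apply, hX.eq]
  exact Complex.conj_eq_iff_re.1 trace_real

end Omega

/-- The TDVP quadratic functional `v ↦ tr[(Σ_j v^j T_j − L) Ω_ρ^α(Σ_k v^k T_k − L)]`:
the Gram matrix `G_{jk} = tr[T_j Ω_ρ^α(T_k)]` is invertible (and real), the vector
`l_j = tr[T_j Ω_ρ^α(L)]` has real entries, and the functional attains its unique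
minimum at `v = G⁻¹ l`. -/
theorem tdvp_solution {n : Type*} [Fintype n] [DecidableEq n]
    {ρ : Matrix n n ℂ} (hρ : ρ.PosDef) (α : ℝ) {D : ℕ}
    (T : Fin D → Matrix n n ℂ) (hT : ∀ j, (T j).IsHermitian)
    (hTind : LinearIndependent ℝ T)
    (L : Matrix n n ℂ) (hL : L.IsHermitian)
    (G : Matrix (Fin D) (Fin D) ℝ)
    (hG : G = Matrix.of fun j k => (Matrix.trace (T j * Omega hρ.1 α (T k))).re)
    (l : Fin D → ℝ) (hl : l = fun j => (Matrix.trace (T j * Omega hρ.1 α L)).re) :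
    (∀ j k, ((G j k : ℝ) : ℂ) = Matrix.trace (T j * Omega hρ.1 α (T k))) ∧
    IsUnit G ∧
    (∀ j, Matrix.trace (T j * Omega hρ.1 α L) = ((l j : ℝ) : ℂ)) ∧
    (∀ v : Fin D → ℝ,
      Matrix.trace ((∑ k, G⁻¹.mulVec l k • T k - L) *
          Omega hρ.1 α (∑ k, G⁻¹.mulVec l k • T k - L)) ≤
        Matrix.trace ((∑ k, v k • T k - L) * Omega hρ.1 α (∑ k, v k • T k - L))) ∧
    (∀ v : Fin D → ℝ, v ≠ G⁻¹.mulVec l →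
      Matrix.trace ((∑ k, G⁻¹.mulVec l k • T k - L) *
          Omega hρ.1 α (∑ k, G⁻¹.mulVec l k • T k - L)) <
        Matrix.trace ((∑ k, v k • T k - L) * Omega hρ.1 α (∑ k, v k • T k - L))) := by
  have G_eq : G = gramMatrix (omegaForm hρ.1 α) T := by
    simp only [hG, gramMatrix, omegaForm_apply, (hT _).eq]
  have l_eq : l = fun j => omegaForm hρ.1 α (T j) L := by
    simp only [hl, omegaForm_apply, (hT _).eq]
  have minimizer_eq : G⁻¹.mulVec l = leastSquaresCoeff (omegaForm hρ.1 α) T L := by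
    rw [G_eq, l_eq, leastSquaresCoeff]
  have cost_eq (v : Fin D → ℝ) :
      Matrix.trace ((∑ k, v k • T k - L) * Omega hρ.1 α (∑ k, v k • T k - L)) =
        (omegaForm hρ.1 α).toQuadraticMap (Fintype.linearCombination ℝ T v - L) :=
    have hv := (isSelfAdjoint_linearCombination hT v).sub hL
    (ofReal_omegaForm hρ.1 α hv hv).symm
  have cost_lt {v : Fin D → ℝ} (hv : v ≠ G⁻¹.mulVec l) := Complex.real_lt_real.2 <|
    toQuadraticMap_leastSquaresCoeff_lt (isSymm_omegaForm hρ.1 α) (posDef_omegaForm hρ α) hTind L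
      (minimizer_eq ▸ hv)
  simp only [cost_eq, minimizer_eq] at cost_lt ⊢
  refine ⟨fun j k => ?_, ?_, fun j => ?_, fun v => ?_, fun v => cost_lt⟩
  · rw [G_eq, gramMatrix, Matrix.of_apply, ofReal_omegaForm hρ.1 α (hT j) (hT k)]
  · exact G_eq ▸ isUnit_gramMatrix (posDef_omegaForm hρ α).anisotropic hTind
  · rw [l_eq, ofReal_omegaForm hρ.1 α (hT j) hL]
  · obtain rfl | hv := eq_or_ne v (leastSquaresCoeff (omegaForm hρ.1 α) T L)
    exacts [le_rfl, (cost_lt hv).le]
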